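/- Let ν ∈ (−1/2,1) and C₁ ≥ 1. There exists a constant C > 0, depending only on ν and C₁, such that for every nonnegative measurable g : ℝ³ → ℝ with finite second moment satisfying (2C₁)^{−1} ≤ ρ ≤ 2C₁, (2C₁)^{−1} ≤ T ≤ 2C₁ and |u| ≤ 2C₁, one has for all v ∈ ℝ³: |M_ν(v) − μ(v)| ≤ C·(|ρ − 1| + |u| + ∥𝒯_ν − Id∥)·exp(−|v|²/C), where ∥·∥ denotes the Frobenius norm on 3×3 matrices. -/

import Mathlib

open MeasureTheory Real Matrix ENNReal

noncomputable section

/-- Velocity/position space `ℝ³`. -/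
abbrev E3 : Type := EuclideanSpace ℝ (Fin 3)

/-- The normalized global Maxwellian `μ(v) = (2π)^{-3/2} exp(-|v|²/2)`. -/
def Mw (v : E3) : ℝ := (2 * π) ^ (-(3 : ℝ) / 2) * Real.exp (-‖v‖ ^ 2 / 2)

/-- Density `ρ = ∫ g dv`. -/
def dens (g : E3 → ℝ) : ℝ := ∫ v, g v

/-- Bulk velocity `u = ρ⁻¹ ∫ v g dv`. -/
def bulk (g : E3 → ℝ) : E3 := (dens g)⁻¹ • ∫ v, g v • v

/-- Temperature `T = (3ρ)⁻¹ ∫ |v-u|² g dv`. -/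
def temp (g : E3 → ℝ) : ℝ := (3 * dens g)⁻¹ * ∫ v, ‖v - bulk g‖ ^ 2 * g v

/-- Stress tensor `Θ = ρ⁻¹ ∫ (v-u)⊗(v-u) g dv`. -/
def stress (g : E3 → ℝ) : Matrix (Fin 3) (Fin 3) ℝ :=
  Matrix.of fun i j => (dens g)⁻¹ * ∫ v, (v - bulk g) i * (v - bulk g) j * g v

/-- Temperature tensor `𝒯_ν = (1-ν) T Id + ν Θ`. -/
def tempTensor (g : E3 → ℝ) (ν : ℝ) : Matrix (Fin 3) (Fin 3) ℝ :=
  ((1 - ν) * temp g) • (1 : Matrix (Fin 3) (Fin 3) ℝ) + ν • stress g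

/-- Anisotropic Gaussian `M_ν = ρ det(2π𝒯_ν)^{-1/2} exp(-½ (v-u)ᵀ𝒯_ν⁻¹(v-u))`. -/
def aGauss (g : E3 → ℝ) (ν : ℝ) (v : E3) : ℝ :=
  dens g / Real.sqrt (((2 * π) • tempTensor g ν).det) *
    Real.exp (-(1 / 2) *
      ((fun i => (v - bulk g) i) ⬝ᵥ ((tempTensor g ν)⁻¹ *ᵥ fun i => (v - bulk g) i)))

/-- Collision frequency `A_ν = ρT/(1-ν)`. -/
def collFreq (g : E3 → ℝ) (ν : ℝ) : ℝ := dens g * temp g / (1 - ν)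

/-- Weighted sup-norm `‖w f‖_{L^∞} = sup_{x,v} (1+|v|)^β f(x,v)`. -/
def wSup (β : ℝ) (f : E3 → E3 → ℝ) : ℝ :=
  ⨆ p : E3 × E3, (1 + ‖p.2‖) ^ β * f p.1 p.2

/-- Finiteness of the weighted sup-norm. -/
def WBdd (β : ℝ) (f : E3 → E3 → ℝ) : Prop :=
  BddAbove (Set.range fun p : E3 × E3 => (1 + ‖p.2‖) ^ β * f p.1 p.2)

/-- A (global-in-time) mild solution of the ES-BGK equation
`∂ₜF + v·∇ₓF = A_ν (M_ν - F)` with initial datum `F₀`. -/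
structure IsMildSolution (ν β : ℝ) (F₀ : E3 → E3 → ℝ) (F : ℝ → E3 → E3 → ℝ) : Prop where
  nonneg : ∀ t, 0 ≤ t → ∀ x v, 0 ≤ F t x v
  meas : ∀ t, 0 ≤ t → Measurable fun p : E3 × E3 => F t p.1 p.2
  integrable : ∀ t, 0 ≤ t → ∀ x, Integrable (F t x)
  moment2 : ∀ t, 0 ≤ t → ∀ x, Integrable fun v => ‖v‖ ^ 2 * F t x v
  dens_pos : ∀ t, 0 ≤ t → ∀ x, 0 < dens (F t x)
  temp_pos : ∀ t, 0 ≤ t → ∀ x, 0 < temp (F t x)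
  wnorm_bdd : ∀ t, 0 ≤ t → WBdd β (F t)
  wnorm_cont : ContinuousOn (fun t => wSup β (F t)) (Set.Ici 0)
  mild : ∀ t, 0 ≤ t → ∀ x v,
    F t x v = F₀ (x - t • v) v *
        Real.exp (-(∫ τ in (0 : ℝ)..t, collFreq (F τ (x - (t - τ) • v)) ν))
      + ∫ s in (0 : ℝ)..t,
          Real.exp (-(∫ τ in s..t, collFreq (F τ (x - (t - τ) • v)) ν)) *
            collFreq (F s (x - (t - s) • v)) ν * aGauss (F s (x - (t - s) • v)) ν v

/-- The entropy functional `ℰ(F₀)`. -/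
def entE (F₀ : E3 → E3 → ℝ) : ℝ :=
  (∫ p : E3 × E3, (F₀ p.1 p.2 * Real.log (F₀ p.1 p.2) - Mw p.2 * Real.log (Mw p.2)))
    + (3 / 2 * Real.log (2 * π) - 1) * (∫ p : E3 × E3, (F₀ p.1 p.2 - Mw p.2))
    + 1 / 2 * ∫ p : E3 × E3, ‖p.2‖ ^ 2 * (F₀ p.1 p.2 - Mw p.2)

/-- Componentwise absolute value of `∫ (1, v, |v|², v⊗v) (f - μ) dv`. -/
def momentGap (f : E3 → ℝ) : ℝ :=
  |∫ v, (f v - Mw v)| ⊔ (⨆ i : Fin 3, |∫ v, v i * (f v - Mw v)|) ⊔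
    |∫ v, ‖v‖ ^ 2 * (f v - Mw v)| ⊔
    ⨆ ij : Fin 3 × Fin 3, |∫ v, v ij.1 * v ij.2 * (f v - Mw v)|

/-- `N_q(g) = sup_v (1+|v|)^q g(v)`, valued in `ℝ≥0∞`. -/
def Nq (q : ℝ) (g : E3 → ℝ) : ℝ≥0∞ :=
  ⨆ v : E3, ENNReal.ofReal ((1 + ‖v‖) ^ q * g v)

end

/-- The Frobenius norm of a `3×3` real matrix. -/
noncomputable def frobNorm (A : Matrix (Fin 3) (Fin 3) ℝ) : ℝ :=
  Real.sqrt (∑ i, ∑ j, A i j ^ 2)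

lemma dotProduct_stress_mulVec {g : E3 → ℝ} (hg : Measurable g) (hg0 : ∀ v, 0 ≤ g v)
    (hint : Integrable g) (hint2 : Integrable fun v => ‖v‖ ^ 2 * g v) (hρ : 0 < dens g)
    (x : Fin 3 → ℝ) :
    0 ≤ x ⬝ᵥ (stress g *ᵥ x) ∧ x ⬝ᵥ (stress g *ᵥ x) ≤ 3 * temp g * (x ⬝ᵥ x) := by
  set u := bulk g with hu
  have hint3 : Integrable fun v => ‖v - u‖ ^ 2 * g v := by
    refine Integrable.mono' ((hint2.const_mul 2).add (hint.const_mul (2 * ‖u‖ ^ 2)))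
      (by fun_prop) (ae_of_all _ fun v => ?_)
    rw [Real.norm_of_nonneg (mul_nonneg (sq_nonneg _) (hg0 v))]
    have h : ‖v - u‖ ^ 2 ≤ 2 * ‖v‖ ^ 2 + 2 * ‖u‖ ^ 2 := by
      nlinarith [norm_sub_le v u, norm_nonneg (v - u), sq_nonneg (‖v‖ - ‖u‖)]
    have := mul_le_mul_of_nonneg_right h (hg0 v)
    simp only [Pi.add_apply]
    linarith
  have hnorm : ∀ w : E3, ‖w‖ ^ 2 = ∑ i, w i ^ 2 := fun w => by
    simp [EuclideanSpace.norm_sq_eq]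
  have hij : ∀ i j : Fin 3, Integrable fun v => (v - u) i * (v - u) j * g v := by
    intro i j
    refine hint3.mono' ?_ (ae_of_all _ fun v => ?_)
    · refine Measurable.aestronglyMeasurable ?_
      simp only [PiLp.sub_apply]
      fun_prop
    · rw [norm_mul, Real.norm_of_nonneg (hg0 v), norm_mul]
      refine mul_le_mul_of_nonneg_right ?_ (hg0 v)
      nlinarith [PiLp.norm_apply_le (v - u) i, PiLp.norm_apply_le (v - u) j,
        norm_nonneg ((v - u) i), norm_nonneg ((v - u) j), norm_nonneg (v - u)]
  have hform : x ⬝ᵥ (stress g *ᵥ x) = (dens g)⁻¹ * ∫ v, (∑ i, x i * (v - u) i) ^ 2 * g v := by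
    have : ∀ v : E3, (∑ i, x i * (v - u) i) ^ 2 * g v
        = ∑ i, ∑ j, x i * x j * ((v - u) i * (v - u) j * g v) := by
      intro v
      simp only [Fin.sum_univ_three]
      ring
    simp_rw [this]
    rw [integral_finsetSum _ fun i _ => integrable_finsetSum _ fun j _ => (hij i j).const_mul _]
    simp_rw [integral_finsetSum _ fun j _ => (hij _ j).const_mul _, integral_const_mul]
    simp only [dotProduct, mulVec, stress, Matrix.of_apply, Finset.mul_sum, ← hu]
    refine Finset.sum_congr rfl fun i _ => Finset.sum_congr rfl fun j _ => by ring
  rw [hform]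
  refine ⟨mul_nonneg (inv_nonneg.2 hρ.le)
    (integral_nonneg fun v => mul_nonneg (sq_nonneg _) (hg0 v)), ?_⟩
  have hle : ∫ v, (∑ i, x i * (v - u) i) ^ 2 * g v ≤ ∫ v, (x ⬝ᵥ x) * (‖v - u‖ ^ 2 * g v) := by
    refine integral_mono_of_nonneg (ae_of_all _ fun v => mul_nonneg (sq_nonneg _) (hg0 v))
      (hint3.const_mul _) (ae_of_all _ fun v => ?_)
    have h := Finset.sum_mul_sq_le_sq_mul_sq Finset.univ x fun i => (v - u) i
    rw [← hnorm (v - u)] at h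
    have hx : x ⬝ᵥ x = ∑ i, x i ^ 2 := by simp [dotProduct, sq]
    simp only
    rw [← mul_assoc, hx]
    exact mul_le_mul_of_nonneg_right h (hg0 v)
  rw [integral_const_mul] at hle
  calc _ ≤ (dens g)⁻¹ * ((x ⬝ᵥ x) * ∫ v, ‖v - u‖ ^ 2 * g v) :=
        mul_le_mul_of_nonneg_left hle (inv_nonneg.2 hρ.le)
    _ = _ := by rw [temp]; field_simp; rfl

lemma tempTensor_isHermitian (g : E3 → ℝ) (ν : ℝ) : (tempTensor g ν).IsHermitian := by
  ext i j
  simp only [conjTranspose_apply, star_trivial, tempTensor, Matrix.add_apply, Matrix.smul_apply,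
    stress, Matrix.of_apply, Matrix.one_apply, eq_comm (a := i),
    mul_comm ((_ - bulk g : E3) i)]

lemma pow_le_det_of_le_dotProduct_mulVec {n : Type*} [Fintype n] [DecidableEq n]
    {A : Matrix n n ℝ} {c : ℝ} (hA : A.IsHermitian) (hc : 0 ≤ c)
    (h : ∀ x, c * (x ⬝ᵥ x) ≤ x ⬝ᵥ (A *ᵥ x)) : c ^ Fintype.card n ≤ A.det := by
  rw [hA.det_eq_prod_eigenvalues, ← Finset.card_univ, ← Finset.prod_const]
  refine Finset.prod_le_prod (fun _ _ => hc) fun i _ => ?_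
  have h1 := h (hA.eigenvectorBasis i).ofLp
  have h2 : (hA.eigenvectorBasis i).ofLp ⬝ᵥ (hA.eigenvectorBasis i).ofLp = 1 := by
    have := EuclideanSpace.real_norm_sq_eq (hA.eigenvectorBasis i)
    rw [hA.eigenvectorBasis.orthonormal.1 i] at this
    simpa [dotProduct, sq] using this.symm
  rw [hA.mulVec_eigenvectorBasis, dotProduct_smul, h2] at h1
  simpa using h1

lemma dotProduct_self_le_of_le_dotProduct_mulVec {n : Type*} [Fintype n] {A : Matrix n n ℝ}
    {K : ℝ} (hK : 0 < K) (h : ∀ x, K⁻¹ * (x ⬝ᵥ x) ≤ x ⬝ᵥ (A *ᵥ x)) (y : n → ℝ) :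
    y ⬝ᵥ y ≤ K ^ 2 * ((A *ᵥ y) ⬝ᵥ (A *ᵥ y)) := by
  have h0 : 0 ≤ y ⬝ᵥ y := by simpa using dotProduct_star_self_nonneg y
  have hcs : (y ⬝ᵥ (A *ᵥ y)) ^ 2 ≤ (y ⬝ᵥ y) * ((A *ᵥ y) ⬝ᵥ (A *ᵥ y)) := by
    simpa [dotProduct, sq] using Finset.sum_mul_sq_le_sq_mul_sq Finset.univ y (A *ᵥ y)
  have h1 : y ⬝ᵥ y ≤ K * (y ⬝ᵥ (A *ᵥ y)) := by
    have := mul_le_mul_of_nonneg_left (h y) hK.le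
    rwa [← mul_assoc, mul_inv_cancel₀ hK.ne', one_mul] at this
  have h2 : (y ⬝ᵥ y) ^ 2 ≤ K ^ 2 * (y ⬝ᵥ (A *ᵥ y)) ^ 2 := by
    rw [← mul_pow]; exact pow_le_pow_left₀ h0 h1 2
  rcases h0.eq_or_lt with h3 | h3
  · rw [← h3]
    have : 0 ≤ (A *ᵥ y) ⬝ᵥ (A *ᵥ y) := by simpa using dotProduct_star_self_nonneg (A *ᵥ y)
    positivity
  · refine le_of_mul_le_mul_left ?_ h3
    nlinarith [mul_le_mul_of_nonneg_left hcs (sq_nonneg K)]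

lemma dotProduct_mulVec_self_le {n : Type*} [Fintype n] {A : Matrix n n ℝ} {K : ℝ} (hK : 0 < K)
    (hA : A.IsHermitian) (h0 : ∀ x, 0 ≤ x ⬝ᵥ (A *ᵥ x))
    (h : ∀ x, x ⬝ᵥ (A *ᵥ x) ≤ K * (x ⬝ᵥ x)) (y : n → ℝ) :
    (A *ᵥ y) ⬝ᵥ (A *ᵥ y) ≤ K * (y ⬝ᵥ (A *ᵥ y)) := by
  have hsymm : ∀ x z : n → ℝ, x ⬝ᵥ (A *ᵥ z) = (A *ᵥ x) ⬝ᵥ z := by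
    intro x z
    have : Aᵀ = A := by simpa [conjTranspose_eq_transpose_of_trivial] using hA.eq
    rw [dotProduct_mulVec, ← mulVec_transpose, this]
  have h1 := h0 (y - K⁻¹ • (A *ᵥ y))
  have h2 := h (A *ᵥ y)
  have h3 : (y - K⁻¹ • (A *ᵥ y)) ⬝ᵥ (A *ᵥ (y - K⁻¹ • (A *ᵥ y))) =
      y ⬝ᵥ (A *ᵥ y) - 2 * K⁻¹ * ((A *ᵥ y) ⬝ᵥ (A *ᵥ y))
        + K⁻¹ ^ 2 * ((A *ᵥ y) ⬝ᵥ (A *ᵥ (A *ᵥ y))) := by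
    simp only [mulVec_sub, mulVec_smul, dotProduct_sub, sub_dotProduct, smul_dotProduct,
      dotProduct_smul, smul_eq_mul]
    rw [hsymm y (A *ᵥ y)]
    ring
  rw [h3] at h1
  have h4 := mul_le_mul_of_nonneg_left h2 (sq_nonneg K⁻¹)
  have h5 : K⁻¹ ^ 2 * (K * ((A *ᵥ y) ⬝ᵥ (A *ᵥ y))) = K⁻¹ * ((A *ᵥ y) ⬝ᵥ (A *ᵥ y)) := by
    field_simp
  have h6 : K⁻¹ * ((A *ᵥ y) ⬝ᵥ (A *ᵥ y)) ≤ y ⬝ᵥ (A *ᵥ y) := by linarith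
  rwa [inv_mul_le_iff₀ hK] at h6

lemma dotProduct_mulVec_sq_le_frobNorm (B : Matrix (Fin 3) (Fin 3) ℝ) (x y : Fin 3 → ℝ) :
    (x ⬝ᵥ (B *ᵥ y)) ^ 2 ≤ frobNorm B ^ 2 * ((x ⬝ᵥ x) * (y ⬝ᵥ y)) := by
  have hf : frobNorm B ^ 2 = ∑ i, ∑ j, B i j ^ 2 :=
    Real.sq_sqrt (Finset.sum_nonneg fun _ _ => Finset.sum_nonneg fun _ _ => sq_nonneg _)
  have hsq : ∀ z : Fin 3 → ℝ, z ⬝ᵥ z = ∑ i, z i ^ 2 := fun z => by simp [dotProduct, sq]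
  have h1 : (x ⬝ᵥ (B *ᵥ y)) ^ 2 ≤ (x ⬝ᵥ x) * ((B *ᵥ y) ⬝ᵥ (B *ᵥ y)) := by
    rw [hsq, hsq]; exact Finset.sum_mul_sq_le_sq_mul_sq Finset.univ x (B *ᵥ y)
  have h2 : (B *ᵥ y) ⬝ᵥ (B *ᵥ y) ≤ frobNorm B ^ 2 * (y ⬝ᵥ y) := by
    rw [hf, hsq, hsq, Finset.sum_mul]
    exact Finset.sum_le_sum fun i _ => Finset.sum_mul_sq_le_sq_mul_sq Finset.univ (B i) y
  have h0 : 0 ≤ x ⬝ᵥ x := by simpa using dotProduct_star_self_nonneg x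
  nlinarith [mul_le_mul_of_nonneg_left h2 h0]

lemma abs_apply_le_frobNorm (B : Matrix (Fin 3) (Fin 3) ℝ) (i j : Fin 3) :
    |B i j| ≤ frobNorm B := by
  refine Real.abs_le_sqrt ?_
  calc B i j ^ 2 ≤ ∑ j, B i j ^ 2 :=
        Finset.single_le_sum (fun _ _ => sq_nonneg _) (Finset.mem_univ j)
    _ ≤ _ := Finset.single_le_sum (f := fun i => ∑ j, B i j ^ 2)
        (fun _ _ => Finset.sum_nonneg fun _ _ => sq_nonneg _) (Finset.mem_univ i)

lemma abs_det_sub_one_le {A : Matrix (Fin 3) (Fin 3) ℝ} (h : frobNorm (A - 1) ≤ 1) :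
    |A.det - 1| ≤ 15 * frobNorm (A - 1) := by
  obtain ⟨B, rfl⟩ : ∃ B, A = 1 + B := ⟨A - 1, by simp⟩
  rw [add_sub_cancel_left] at h ⊢
  set f := frobNorm B
  have hb : ∀ i j, |B i j| ≤ f := abs_apply_le_frobNorm B
  have hf0 : 0 ≤ f := Real.sqrt_nonneg _
  have h2 : ∀ i j k l, |B i j * B k l| ≤ f := fun i j k l => by
    rw [abs_mul]
    nlinarith [hb i j, hb k l, abs_nonneg (B i j), abs_nonneg (B k l)]
  have h3 : ∀ i j k l m n, |B i j * B k l * B m n| ≤ f := fun i j k l m n => by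
    rw [abs_mul]
    nlinarith [h2 i j k l, hb m n, abs_nonneg (B i j * B k l), abs_nonneg (B m n)]
  rw [det_fin_three]
  simp only [Matrix.add_apply, Matrix.one_apply]
  norm_num [Fin.ext_iff]
  rw [abs_le]
  have l0 := abs_le.1 (hb 0 0)
  have l1 := abs_le.1 (hb 1 1)
  have l2 := abs_le.1 (hb 2 2)
  have m0 := abs_le.1 (h2 0 0 1 1)
  have m1 := abs_le.1 (h2 0 0 2 2)
  have m2 := abs_le.1 (h2 1 1 2 2)
  have m3 := abs_le.1 (h2 0 1 1 0)
  have m4 := abs_le.1 (h2 0 2 2 0)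
  have m5 := abs_le.1 (h2 1 2 2 1)
  have n0 := abs_le.1 (h3 0 0 1 1 2 2)
  have n1 := abs_le.1 (h3 0 0 1 2 2 1)
  have n2 := abs_le.1 (h3 0 1 1 0 2 2)
  have n3 := abs_le.1 (h3 0 1 1 2 2 0)
  have n4 := abs_le.1 (h3 0 2 1 0 2 1)
  have n5 := abs_le.1 (h3 0 2 1 1 2 0)
  constructor <;> nlinarith

lemma abs_exp_neg_sub_exp_neg_le {a b c : ℝ} (ha : c ≤ a) (hb : c ≤ b) :
    |Real.exp (-a) - Real.exp (-b)| ≤ |a - b| * Real.exp (-c) := by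
  wlog hab : a ≤ b generalizing a b
  · rw [abs_sub_comm, abs_sub_comm a b]
    exact this hb ha (le_of_not_ge hab)
  rw [abs_of_nonneg (sub_nonneg.2 (Real.exp_le_exp.2 (neg_le_neg hab))), abs_sub_comm,
    abs_of_nonneg (sub_nonneg.2 hab)]
  have h1 := Real.add_one_le_exp (a - b)
  have h2 : Real.exp (-b) = Real.exp (-a) * Real.exp (a - b) := by
    rw [← Real.exp_add]; congr 1; ring
  calc Real.exp (-a) - Real.exp (-b) = Real.exp (-a) * (1 - Real.exp (a - b)) := by rw [h2]; ring
    _ ≤ Real.exp (-a) * (b - a) :=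
        mul_le_mul_of_nonneg_left (by linarith) (Real.exp_pos _).le
    _ ≤ Real.exp (-c) * (b - a) :=
        mul_le_mul_of_nonneg_right (Real.exp_le_exp.2 (neg_le_neg ha)) (sub_nonneg.2 hab)
    _ = _ := mul_comm _ _

lemma one_div_sqrt_two_pi_pow_three_mul {D : ℝ} :
    1 / √((2 * π) ^ 3 * D) = (2 * π) ^ (-(3 : ℝ) / 2) / √D := by
  have h : (0 : ℝ) < 2 * π := by positivity
  rw [Real.sqrt_mul (by positivity), neg_div, Real.rpow_neg h.le, Real.sqrt_eq_rpow ((2 * π) ^ 3),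
    ← Real.rpow_natCast, ← Real.rpow_mul h.le]
  norm_num
  ring

lemma two_pi_rpow_le_one : (2 * π) ^ (-(3 : ℝ) / 2) ≤ 1 :=
  Real.rpow_le_one_of_one_le_of_nonpos (by linarith [Real.pi_gt_three]) (by norm_num)

lemma abs_div_sqrt_det_sub_one_le {A : Matrix (Fin 3) (Fin 3) ℝ} {K ρ : ℝ} (hK : 1 ≤ K)
    (hρ0 : 0 ≤ ρ) (hρ : ρ ≤ K) (hdet : K⁻¹ ^ 3 ≤ A.det) :
    |ρ / √A.det - 1| ≤ 16 * K ^ 4 * (|ρ - 1| + frobNorm (A - 1)) := by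
  set f := frobNorm (A - 1) with hf
  have hf0 : 0 ≤ f := Real.sqrt_nonneg _
  have hK0 : 0 < K := by linarith
  have hD : 0 < A.det := lt_of_lt_of_le (by positivity) hdet
  have hs : 0 < √A.det := Real.sqrt_pos.2 hD
  have hss : √A.det ^ 2 = A.det := Real.sq_sqrt hD.le
  have hK3 : 1 ≤ K ^ 3 := one_le_pow₀ hK
  have hK4 : 1 ≤ K ^ 4 := one_le_pow₀ hK
  have hinv : (√A.det)⁻¹ ≤ K ^ 3 := by
    rw [inv_le_comm₀ hs (by positivity), ← inv_pow]
    refine Real.le_sqrt_of_sq_le (le_trans ?_ hdet)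
    have h1 : K⁻¹ ^ 3 ≤ 1 := pow_le_one₀ (by positivity) (inv_le_one_of_one_le₀ hK)
    have h0 : 0 ≤ K⁻¹ ^ 3 := by positivity
    nlinarith
  have hi0 : 0 < (√A.det)⁻¹ := by positivity
  rcases le_total f 1 with h | h
  · have h1 : |A.det - 1| ≤ 15 * f := abs_det_sub_one_le h
    have h2 : |1 - √A.det| ≤ |A.det - 1| := by
      have : A.det - 1 = (√A.det - 1) * (√A.det + 1) := by linear_combination -hss
      rw [this, abs_mul, abs_sub_comm, abs_of_pos (show 0 < √A.det + 1 by linarith)]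
      nlinarith [abs_nonneg (√A.det - 1)]
    have h3 : ρ / √A.det - 1 = (√A.det)⁻¹ * ((ρ - 1) + (1 - √A.det)) := by field_simp; ring
    rw [h3, abs_mul, abs_of_pos hi0]
    have h4 : |ρ - 1 + (1 - √A.det)| ≤ 15 * (|ρ - 1| + f) := by
      have := abs_add_le (ρ - 1) (1 - √A.det)
      linarith [abs_nonneg (ρ - 1)]
    have h5 : 0 ≤ |ρ - 1| + f := by positivity
    calc _ ≤ K ^ 3 * (15 * (|ρ - 1| + f)) := mul_le_mul hinv h4 (abs_nonneg _) (by positivity)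
      _ ≤ _ := by
        have : K ^ 3 ≤ K ^ 4 := pow_le_pow_right₀ hK (by norm_num)
        nlinarith
  · have h1 : ρ / √A.det ≤ K ^ 4 := by
      rw [div_eq_mul_inv]
      calc _ ≤ K * K ^ 3 := mul_le_mul hρ hinv hi0.le hK0.le
        _ = _ := by ring
    have h2 : 0 ≤ ρ / √A.det := by positivity
    have h3 : |ρ / √A.det - 1| ≤ K ^ 4 := by
      rw [abs_le]; constructor <;> linarith
    have h4 : 1 ≤ 16 * (|ρ - 1| + f) := by linarith [abs_nonneg (ρ - 1)]
    nlinarith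

lemma quadratic_form_bounds {A : Matrix (Fin 3) (Fin 3) ℝ} {K : ℝ} (hK : 0 < K)
    (hA : A.IsHermitian) (hdet : 0 < A.det) (hlo : ∀ x, K⁻¹ * (x ⬝ᵥ x) ≤ x ⬝ᵥ (A *ᵥ x))
    (hhi : ∀ x, x ⬝ᵥ (A *ᵥ x) ≤ K * (x ⬝ᵥ x)) (w : Fin 3 → ℝ) :
    w ⬝ᵥ w ≤ K * (w ⬝ᵥ (A⁻¹ *ᵥ w)) ∧
      |w ⬝ᵥ (A⁻¹ *ᵥ w) - w ⬝ᵥ w| ≤ K * frobNorm (A - 1) * (w ⬝ᵥ w) := by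
  have hnn : ∀ x : Fin 3 → ℝ, 0 ≤ x ⬝ᵥ x := fun x => by
    simpa using dotProduct_star_self_nonneg x
  have hw : w = A *ᵥ (A⁻¹ *ᵥ w) := by
    rw [mulVec_mulVec, mul_nonsing_inv _ hdet.ne'.isUnit, one_mulVec]
  set y := A⁻¹ *ᵥ w
  constructor
  · have := dotProduct_mulVec_self_le hK hA
      (fun x => (mul_nonneg (inv_nonneg.2 hK.le) (hnn x)).trans (hlo x)) hhi y
    rw [← hw] at this
    rwa [dotProduct_comm w y]
  · have h1 := dotProduct_self_le_of_le_dotProduct_mulVec hK hlo y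
    rw [← hw] at h1
    have h2 := dotProduct_mulVec_sq_le_frobNorm (A - 1) w y
    have h3 : w ⬝ᵥ ((A - 1) *ᵥ y) = w ⬝ᵥ w - w ⬝ᵥ y := by
      rw [sub_mulVec, ← hw, one_mulVec, dotProduct_sub]
    rw [h3] at h2
    have hf0 : 0 ≤ frobNorm (A - 1) := Real.sqrt_nonneg _
    rw [abs_sub_comm]
    refine abs_le_of_sq_le_sq ?_ (mul_nonneg (mul_nonneg hK.le hf0) (hnn w))
    refine h2.trans ?_
    have h4 := mul_le_mul_of_nonneg_left h1 (hnn w)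
    nlinarith [mul_le_mul_of_nonneg_left h4 (sq_nonneg (frobNorm (A - 1)))]

set_option maxHeartbeats 1000000 in
/-- Gaussian with covariance `A` spectrally pinched in `[K⁻¹, K]`, compared with the Maxwellian. -/
lemma abs_gaussian_sub_Mw_le {A : Matrix (Fin 3) (Fin 3) ℝ} {K ρ : ℝ} {u : E3} (hK : 1 ≤ K)
    (hA : A.IsHermitian) (hlo : ∀ x, K⁻¹ * (x ⬝ᵥ x) ≤ x ⬝ᵥ (A *ᵥ x))
    (hhi : ∀ x, x ⬝ᵥ (A *ᵥ x) ≤ K * (x ⬝ᵥ x)) (hρ0 : 0 ≤ ρ) (hρ : ρ ≤ K) (hu : ‖u‖ ≤ K) (v : E3) :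
    |ρ / √((2 * π) • A).det *
        Real.exp (-(1 / 2) * ((fun i => (v - u) i) ⬝ᵥ (A⁻¹ *ᵥ fun i => (v - u) i))) - Mw v| ≤
      1000 * K ^ 4 * Real.exp (K / 2) * (|ρ - 1| + ‖u‖ + frobNorm (A - 1)) *
        Real.exp (-‖v‖ ^ 2 / (8 * K)) := by
  have hK0 : 0 < K := by linarith
  have hdet : K⁻¹ ^ 3 ≤ A.det := by
    simpa using pow_le_det_of_le_dotProduct_mulVec hA (inv_nonneg.2 hK0.le) hlo
  have hD : 0 < A.det := lt_of_lt_of_le (by positivity) hdet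
  have hw2 : (fun i => (v - u) i) ⬝ᵥ (fun i => (v - u) i) = ‖v - u‖ ^ 2 := by
    rw [EuclideanSpace.real_norm_sq_eq]; simp [dotProduct, sq]
  obtain ⟨hq1, hq2⟩ := quadratic_form_bounds hK0 hA hD hlo hhi fun i => (v - u) i
  rw [hw2] at hq1 hq2
  have hpre := abs_div_sqrt_det_sub_one_le hK hρ0 hρ hdet
  set q := (fun i => (v - u) i) ⬝ᵥ (A⁻¹ *ᵥ fun i => (v - u) i)
  set f := frobNorm (A - 1) with hf
  have hf0 : 0 ≤ f := Real.sqrt_nonneg _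
  set S := |ρ - 1| + ‖u‖ + f with hS
  have hS0 : 0 ≤ S := by positivity
  have hru := abs_nonneg (ρ - 1)
  have hu0 := norm_nonneg u
  have hv0 := norm_nonneg v
  have hw0 := norm_nonneg (v - u)
  have htri1 := norm_sub_le v u
  have htri2 := norm_sub_norm_le v u
  have htri3 := abs_norm_sub_norm_le (v - u) v
  rw [sub_sub_cancel_left, norm_neg] at htri3
  set c := ‖v‖ ^ 2 / (4 * K) - K / 2 with hc
  have hcq : c ≤ q / 2 := by
    have h1 : ‖v‖ ^ 2 ≤ 2 * ‖v - u‖ ^ 2 + 2 * ‖u‖ ^ 2 := by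
      nlinarith [sq_nonneg (‖v - u‖ - ‖u‖)]
    have h2 : ‖v‖ ^ 2 ≤ 2 * K * q + 2 * K ^ 2 := by nlinarith
    have h3 : ‖v‖ ^ 2 / (4 * K) ≤ q / 2 + K / 2 := by
      rw [div_le_iff₀ (by positivity)]; nlinarith
    linarith
  have hcv : c ≤ ‖v‖ ^ 2 / 2 := by
    have : ‖v‖ ^ 2 / (4 * K) ≤ ‖v‖ ^ 2 / 2 :=
      div_le_div_of_nonneg_left (sq_nonneg _) (by norm_num) (by linarith)
    linarith
  have hqv : |q / 2 - ‖v‖ ^ 2 / 2| ≤ S * (2 * K * ‖v‖ ^ 2 + 3 * K ^ 3) := by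
    have h1 : |‖v - u‖ ^ 2 - ‖v‖ ^ 2| ≤ ‖u‖ * (2 * ‖v‖ + K) := by
      rw [sq_sub_sq, abs_mul, abs_of_nonneg (by positivity), mul_comm]
      exact mul_le_mul htri3 (by linarith) (by positivity) hu0
    have h2 : ‖v - u‖ ^ 2 ≤ 2 * ‖v‖ ^ 2 + 2 * K ^ 2 := by
      nlinarith [sq_nonneg (‖v‖ - ‖u‖)]
    have h3 : |q - ‖v‖ ^ 2| ≤ K * f * (2 * ‖v‖ ^ 2 + 2 * K ^ 2) + ‖u‖ * (2 * ‖v‖ + K) := by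
      have := abs_sub_le q (‖v - u‖ ^ 2) (‖v‖ ^ 2)
      have := mul_le_mul_of_nonneg_left h2 (mul_nonneg hK0.le hf0)
      linarith
    have h4 : |q / 2 - ‖v‖ ^ 2 / 2| = |q - ‖v‖ ^ 2| / 2 := by
      rw [← sub_div, abs_div, abs_of_pos (by norm_num : (0:ℝ) < 2)]
    have hK23 : K ^ 2 ≤ K ^ 3 := pow_le_pow_right₀ hK (by norm_num)
    have hK12 : K ≤ K ^ 2 := le_self_pow₀ hK (by norm_num)
    have h5 : 2 * ‖v‖ + K ≤ 2 * (2 * K * ‖v‖ ^ 2 + 3 * K ^ 3) := by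
      nlinarith [sq_nonneg (‖v‖ - 1), mul_le_mul_of_nonneg_right hK (sq_nonneg ‖v‖)]
    have h6 : K * (2 * ‖v‖ ^ 2 + 2 * K ^ 2) ≤ 2 * (2 * K * ‖v‖ ^ 2 + 3 * K ^ 3) := by
      have : 0 ≤ K * ‖v‖ ^ 2 := by positivity
      have : 0 ≤ K ^ 3 := by positivity
      linarith
    have h7 := mul_le_mul_of_nonneg_left h5 hu0
    have h8 := mul_le_mul_of_nonneg_left h6 hf0
    have h9 : 0 ≤ |ρ - 1| * (2 * K * ‖v‖ ^ 2 + 3 * K ^ 3) := by positivity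
    rw [h4, hS]
    linarith
  have hexp := abs_exp_neg_sub_exp_neg_le hcq hcv
  have hqe : Real.exp (-(q / 2)) ≤ Real.exp (-c) := Real.exp_le_exp.2 (neg_le_neg hcq)
  have hsplit : ρ / √((2 * π) • A).det * Real.exp (-(1 / 2) * q) - Mw v =
      (2 * π) ^ (-(3 : ℝ) / 2) * ((ρ / √A.det - 1) * Real.exp (-(q / 2))
        + (Real.exp (-(q / 2)) - Real.exp (-(‖v‖ ^ 2 / 2)))) := by
    have h1 : ρ / √((2 * π) • A).det = ρ * ((2 * π) ^ (-(3 : ℝ) / 2) / √A.det) := by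
      rw [det_smul, ← one_div_sqrt_two_pi_pow_three_mul]
      simp [div_eq_mul_inv]
    rw [h1, Mw, show -(1 / 2) * q = -(q / 2) by ring, neg_div (2 : ℝ) (‖v‖ ^ 2)]
    ring
  have hce : Real.exp (-c) =
      Real.exp (K / 2) * (Real.exp (-‖v‖ ^ 2 / (8 * K)) * Real.exp (-‖v‖ ^ 2 / (8 * K))) := by
    rw [← Real.exp_add, ← Real.exp_add]
    congr 1
    rw [hc]; field_simp; ring
  set e := Real.exp (-‖v‖ ^ 2 / (8 * K)) with he
  have he0 : 0 < e := Real.exp_pos _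
  have he1 : e ≤ 1 := Real.exp_le_one_iff.2
    (div_nonpos_of_nonpos_of_nonneg (by linarith [sq_nonneg ‖v‖]) (by positivity))
  have hve : ‖v‖ ^ 2 * e ≤ 8 * K := by
    have h1 := Real.add_one_le_exp (‖v‖ ^ 2 / (8 * K))
    have h2 : Real.exp (‖v‖ ^ 2 / (8 * K)) * e = 1 := by
      rw [he, ← Real.exp_add, neg_div, add_neg_cancel, Real.exp_zero]
    have h3 : ‖v‖ ^ 2 / (8 * K) * e ≤ 1 :=
      h2 ▸ mul_le_mul_of_nonneg_right (by linarith) he0.le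
    rw [div_mul_eq_mul_div, div_le_one (by positivity)] at h3
    exact h3
  have hpre' : |ρ / √A.det - 1| ≤ 16 * K ^ 4 * S :=
    hpre.trans (mul_le_mul_of_nonneg_left (by linarith) (by positivity))
  have hpi0 : (0 : ℝ) ≤ (2 * π) ^ (-(3 : ℝ) / 2) := by positivity
  have hpoly : (16 * K ^ 4 + (2 * K * ‖v‖ ^ 2 + 3 * K ^ 3)) * e ≤ 1000 * K ^ 4 := by
    have h1 : K ^ 3 ≤ K ^ 4 := pow_le_pow_right₀ hK (by norm_num)
    have h2 : K ^ 2 ≤ K ^ 4 := pow_le_pow_right₀ hK (by norm_num)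
    have h3 : 0 < K ^ 4 := by positivity
    have h4 : 0 < K ^ 3 := by positivity
    have h5 := mul_le_mul_of_nonneg_left hve hK0.le
    have h6 := mul_le_mul_of_nonneg_left he1 h3.le
    have h7 := mul_le_mul_of_nonneg_left he1 h4.le
    linarith
  rw [hsplit, abs_mul, abs_of_nonneg hpi0]
  calc _ ≤ 1 * |(ρ / √A.det - 1) * Real.exp (-(q / 2))
        + (Real.exp (-(q / 2)) - Real.exp (-(‖v‖ ^ 2 / 2)))| :=
        mul_le_mul_of_nonneg_right two_pi_rpow_le_one (abs_nonneg _)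
    _ ≤ |ρ / √A.det - 1| * Real.exp (-(q / 2))
        + |Real.exp (-(q / 2)) - Real.exp (-(‖v‖ ^ 2 / 2))| := by
        rw [one_mul]
        refine (abs_add_le _ _).trans ?_
        rw [abs_mul, abs_of_pos (Real.exp_pos (-(q / 2)))]
    _ ≤ 16 * K ^ 4 * S * Real.exp (-c)
        + S * (2 * K * ‖v‖ ^ 2 + 3 * K ^ 3) * Real.exp (-c) := by
        refine add_le_add (mul_le_mul hpre' hqe (Real.exp_pos _).le (by positivity))
          (hexp.trans (mul_le_mul_of_nonneg_right hqv (Real.exp_pos _).le))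
    _ = (16 * K ^ 4 + (2 * K * ‖v‖ ^ 2 + 3 * K ^ 3)) * e * (Real.exp (K / 2) * S * e) := by
        rw [hce]; ring
    _ ≤ 1000 * K ^ 4 * (Real.exp (K / 2) * S * e) :=
        mul_le_mul_of_nonneg_right hpoly (by positivity)
    _ = _ := by ring

lemma dotProduct_tempTensor_mulVec_bounds {g : E3 → ℝ} {ν m : ℝ} (hm1 : m ≤ 1 - ν)
    (hm2 : m ≤ 1 + 2 * ν) (hν1 : -(1 / 2 : ℝ) < ν) (hν2 : ν < 1) (hT : 0 ≤ temp g)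
    {x : Fin 3 → ℝ} (h0 : 0 ≤ x ⬝ᵥ (stress g *ᵥ x))
    (h1 : x ⬝ᵥ (stress g *ᵥ x) ≤ 3 * temp g * (x ⬝ᵥ x)) :
    m * temp g * (x ⬝ᵥ x) ≤ x ⬝ᵥ (tempTensor g ν *ᵥ x) ∧
      x ⬝ᵥ (tempTensor g ν *ᵥ x) ≤ 3 * temp g * (x ⬝ᵥ x) := by
  have hform : x ⬝ᵥ (tempTensor g ν *ᵥ x) =
      (1 - ν) * (temp g * (x ⬝ᵥ x)) + ν * (x ⬝ᵥ (stress g *ᵥ x)) := by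
    simp only [tempTensor, add_mulVec, smul_mulVec, one_mulVec, dotProduct_add, dotProduct_smul,
      smul_eq_mul]
    ring
  have hxx : 0 ≤ x ⬝ᵥ x := by simpa using dotProduct_star_self_nonneg x
  have ht : 0 ≤ temp g * (x ⬝ᵥ x) := mul_nonneg hT hxx
  rw [hform, mul_assoc, mul_assoc]
  rw [mul_assoc] at h1
  set t := temp g * (x ⬝ᵥ x)
  rcases le_total 0 ν with hν | hν
  · constructor <;> nlinarith
  · constructor <;> nlinarith

/-- estimate (4.7): closeness of the anisotropic Gaussian to the global
Maxwellian in terms of the macroscopic quantities. -/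
theorem aGauss_minus_maxwellian_bound
    (ν C1 : ℝ) (hν1 : -(1 / 2 : ℝ) < ν) (hν2 : ν < 1) (hC1 : 1 ≤ C1) :
    ∃ C > (0 : ℝ), ∀ g : E3 → ℝ,
      Measurable g → (∀ v, 0 ≤ g v) →
      Integrable g → Integrable (fun v => ‖v‖ ^ 2 * g v) →
      (2 * C1)⁻¹ ≤ dens g → dens g ≤ 2 * C1 →
      (2 * C1)⁻¹ ≤ temp g → temp g ≤ 2 * C1 → ‖bulk g‖ ≤ 2 * C1 →
      ∀ v : E3,
        |aGauss g ν v - Mw v| ≤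
          C * (|dens g - 1| + ‖bulk g‖ + frobNorm (tempTensor g ν - 1)) *
            Real.exp (-‖v‖ ^ 2 / C) := by
  obtain ⟨m, hm0, hm1, hm2⟩ : ∃ m : ℝ, 0 < m ∧ m ≤ 1 - ν ∧ m ≤ 1 + 2 * ν :=
    ⟨min (1 - ν) (1 + 2 * ν), lt_min (by linarith) (by linarith), min_le_left _ _,
      min_le_right _ _⟩
  have hm3 : m ≤ 1 := by linarith
  have hC0 : 0 < C1 := by linarith
  set K := 6 * C1 / m with hKdef
  have hK6 : 6 * C1 ≤ K := (le_div_iff₀ hm0).2 (by nlinarith)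
  have hK : 1 ≤ K := by linarith
  have hK0 : 0 < K := by linarith
  have hKinv : K⁻¹ ≤ m * (2 * C1)⁻¹ := by
    rw [hKdef, inv_div, div_eq_mul_inv]
    exact mul_le_mul_of_nonneg_left (inv_anti₀ (by linarith) (by linarith)) hm0.le
  set L := 1000 * K ^ 4 * Real.exp (K / 2) with hL
  have hL0 : 0 < L := by positivity
  refine ⟨L + 8 * K, by positivity, ?_⟩
  intro g hg hg0 hint hint2 hρ1 hρ2 hT1 hT2 hu v
  have hinv0 : 0 < (2 * C1)⁻¹ := by positivity
  have hρ : 0 < dens g := by linarith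
  have hT : 0 < temp g := by linarith
  have hx : ∀ x : Fin 3 → ℝ, 0 ≤ x ⬝ᵥ x := fun x => by
    simpa using dotProduct_star_self_nonneg x
  have hb := fun x => dotProduct_tempTensor_mulVec_bounds hm1 hm2 hν1 hν2 hT.le
    (dotProduct_stress_mulVec hg hg0 hint hint2 hρ x).1
    (dotProduct_stress_mulVec hg hg0 hint hint2 hρ x).2
  have hmain := abs_gaussian_sub_Mw_le hK (tempTensor_isHermitian g ν)
    (fun x => (mul_le_mul_of_nonneg_right
      (hKinv.trans (mul_le_mul_of_nonneg_left hT1 hm0.le)) (hx x)).trans (hb x).1)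
    (fun x => (hb x).2.trans (mul_le_mul_of_nonneg_right (by linarith) (hx x)))
    hρ.le (by linarith) (by linarith : ‖bulk g‖ ≤ K) v
  have hS0 : 0 ≤ |dens g - 1| + ‖bulk g‖ + frobNorm (tempTensor g ν - 1) :=
    add_nonneg (by positivity) (Real.sqrt_nonneg _)
  refine hmain.trans (mul_le_mul (mul_le_mul_of_nonneg_right (by linarith) hS0) ?_
    (Real.exp_pos _).le (mul_nonneg (by positivity) hS0))
  refine Real.exp_le_exp.2 ?_
  rw [neg_div, neg_div]
  exact neg_le_neg (div_le_div_of_nonneg_left (sq_nonneg _) (by positivity) (by linarith))
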